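/- For every integer n ≥ 2, if G is an induced subgraph of the n-dimensional hypercube graph Q_n on at least 2^(n-1) + 1 vertices, then G has a vertex v with deg_G(v) > (1/2)·log₂ n − (1/2)·log₂ log₂ n + 1/2. -/

import Mathlib

/-- The hypercube graph `Q_n` on vertex set `{0,1}^n`: two vertices are adjacent
iff they differ in exactly one coordinate. -/
def Qgraph (n : ℕ) : SimpleGraph (Fin n → Bool) where
  Adj x y := (Finset.univ.filter fun i => x i ≠ y i).card = 1
  symm := by
    constructor
    intro x y h
    have h' : (Finset.univ.filter fun i => y i ≠ x i) =
        (Finset.univ.filter fun i => x i ≠ y i) :=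
      Finset.filter_congr fun i _ => ne_comm
    rw [h']
    exact h
  loopless := by
    constructor
    intro x h
    simp at h

instance QgraphDecidableAdj (n : ℕ) : DecidableRel (Qgraph n).Adj := fun x y =>
  inferInstanceAs (Decidable ((Finset.univ.filter fun i => x i ≠ y i).card = 1))

instance QgraphInduceDecidableAdj (n : ℕ) (S : Finset (Fin n → Bool)) :
    DecidableRel ((Qgraph n).induce (↑S : Set (Fin n → Bool))).Adj := fun a b =>
  QgraphDecidableAdj n a b

/-!
This is Huang's argument, which yields a vertex of degree at least `√n`. The edges of `Q_n` can be
signed so that the signed adjacency operator is a sum of `n` pairwise anticommuting involutions,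
one for each coordinate direction; hence it squares to `n`. It also anticommutes with
multiplication by the parity of a vertex, so its eigenvalues `√n` and `-√n` have the same
multiplicity `2 ^ (n - 1)`. A set `S` of more than `2 ^ (n - 1)` vertices therefore supports a
nonzero `√n`-eigenvector, and the vertex where that vector is largest in absolute value has at
least `√n` neighbours in `S`. Finally `√n` exceeds the logarithmic bound.
-/

open Finset Module

section Anticommute

variable {R ι : Type*} [Ring R]

theorem mul_sum_eq_neg_sum_mul {s : Finset ι} {a : ι → R} {b : R}
    (h : ∀ i ∈ s, b * a i = -(a i * b)) : b * ∑ i ∈ s, a i = -((∑ i ∈ s, a i) * b) := by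
  rw [mul_sum, sum_mul, ← sum_neg_distrib]
  exact sum_congr rfl h

theorem sum_mul_sum_self_eq_card_of_anticommute {s : Finset ι} {a : ι → R}
    (hsq : ∀ i ∈ s, a i * a i = 1)
    (hanti : (s : Set ι).Pairwise fun i j => a i * a j = -(a j * a i)) :
    (∑ i ∈ s, a i) * ∑ i ∈ s, a i = #s := by
  classical
  induction s using Finset.induction_on with
  | empty => simp
  | insert k s hk ih =>
    rw [forall_mem_insert] at hsq
    rw [coe_insert] at hanti
    have hcross : a k * ∑ i ∈ s, a i = -((∑ i ∈ s, a i) * a k) :=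
      mul_sum_eq_neg_sum_mul fun i hi =>
        hanti (Set.mem_insert k _) (Set.mem_insert_of_mem k hi) (ne_of_mem_of_not_mem hi hk).symm
    rw [sum_insert hk, card_insert_of_notMem hk, add_mul, mul_add, mul_add, hsq.1, hcross,
      ih hsq.2 (hanti.mono (Set.subset_insert k _))]
    push_cast
    abel

end Anticommute

section Eigenspace

variable {K V : Type*} [Field K] [AddCommGroup V] [Module K V] [FiniteDimensional K V]
  {A P : End K V}

theorem finrank_eigenspace_neg_le_of_anticommute (hP : Function.Injective P)
    (hPA : P * A = -(A * P)) (c : K) :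
    finrank K (A.eigenspace (-c)) ≤ finrank K (A.eigenspace c) := by
  have hmaps : ∀ f ∈ A.eigenspace (-c), P f ∈ A.eigenspace c := by
    intro f hf
    rw [End.mem_eigenspace_iff] at hf ⊢
    have hPAf : P (A f) = -A (P f) := LinearMap.congr_fun hPA f
    rw [hf, map_smul, neg_smul, neg_inj] at hPAf
    exact hPAf.symm
  refine LinearMap.finrank_le_finrank_of_injective (f := P.restrict hmaps) fun f g hfg => ?_
  exact Subtype.ext (hP (congrArg Subtype.val hfg))

theorem finrank_le_finrank_eigenspace_neg_add {c : K} (hA : A * A = (c * c) • 1) :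
    finrank K V ≤ finrank K (A.eigenspace (-c)) + finrank K (A.eigenspace c) := by
  have hrange : LinearMap.range (A - c • 1) ≤ A.eigenspace (-c) := by
    rintro _ ⟨f, rfl⟩
    have hAA : A (A f) = (c * c) • f := LinearMap.congr_fun hA f
    rw [End.mem_eigenspace_iff, LinearMap.sub_apply, LinearMap.smul_apply, End.one_apply,
      map_sub, map_smul, hAA]
    module
  calc finrank K V
      = finrank K (LinearMap.range (A - c • 1)) + finrank K (A.eigenspace c) := by
        rw [End.eigenspace_def, LinearMap.finrank_range_add_finrank_ker]
    _ ≤ _ := by gcongr; exact Submodule.finrank_mono hrange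

theorem finrank_le_two_mul_finrank_eigenspace {c : K} (hA : A * A = (c * c) • 1)
    (hP : Function.Injective P) (hPA : P * A = -(A * P)) :
    finrank K V ≤ 2 * finrank K (A.eigenspace c) := by
  have hsum := finrank_le_finrank_eigenspace_neg_add hA
  have hneg := finrank_eigenspace_neg_le_of_anticommute hP hPA c
  lia

end Eigenspace

theorem exists_mem_ne_zero_forall_notMem_eq_zero {K α : Type*} [DivisionRing K] [Fintype α]
    {E : Submodule K (α → K)} {S : Finset α} (h : Fintype.card α < finrank K E + #S) :
    ∃ f ∈ E, f ≠ 0 ∧ ∀ x ∉ S, f x = 0 := by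
  classical
  let restrictCompl : E →ₗ[K] ({x // x ∉ S} → K) :=
    LinearMap.funLeft K K Subtype.val ∘ₗ E.subtype
  have hlt : finrank K ({x // x ∉ S} → K) < finrank K E := by
    rw [finrank_fintype_fun_eq_card, Fintype.card_subtype_compl, Fintype.card_coe]
    have := S.card_le_univ
    lia
  obtain ⟨⟨f, hfE⟩, hker, hf⟩ := Submodule.exists_mem_ne_zero_of_ne_bot
    (LinearMap.ker_ne_bot_of_finrank_lt (f := restrictCompl) hlt)
  exact ⟨f, hfE, fun h0 => hf (Subtype.ext h0), fun x hx => congrFun hker ⟨x, hx⟩⟩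

theorem exists_le_degree_induce_of_mul_abs_le {V : Type*} {G : SimpleGraph V} [G.LocallyFinite]
    {S : Finset V} [(G.induce (S : Set V)).LocallyFinite] {f : V → ℝ} {μ : ℝ} (hf : f ≠ 0)
    (hfS : ∀ x ∉ S, f x = 0) (hμ : ∀ x ∈ S, μ * |f x| ≤ ∑ y ∈ G.neighborFinset x, |f y|) :
    ∃ v : (S : Set V), μ ≤ (G.induce (S : Set V)).degree v := by
  classical
  obtain ⟨z, hz⟩ := Function.ne_iff.1 hf
  have hzS : z ∈ S := by_contra fun h => hz (hfS z h)
  obtain ⟨x, hxS, hmax⟩ := S.exists_max_image (fun y => |f y|) ⟨z, hzS⟩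
  have hpos : 0 < |f x| := (abs_pos.2 hz).trans_le (hmax z hzS)
  have hcard : #{y ∈ G.neighborFinset x | y ∈ S} = (G.induce (S : Set V)).degree ⟨x, hxS⟩ := by
    rw [← SimpleGraph.card_neighborFinset_eq_degree, ← card_map (.subtype (· ∈ (S : Set V)))]
    congr 1
    ext y
    simp [and_comm]
  refine ⟨⟨x, hxS⟩, le_of_mul_le_mul_right ?_ hpos⟩
  calc μ * |f x| ≤ ∑ y ∈ G.neighborFinset x, |f y| := hμ x hxS
    _ = ∑ y ∈ G.neighborFinset x with y ∈ S, |f y| := by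
        refine (sum_filter_of_ne fun y _ hy => ?_).symm
        exact by_contra fun h => hy (by rw [hfS y h, abs_zero])
    _ ≤ #{y ∈ G.neighborFinset x | y ∈ S} • |f x| :=
        sum_le_card_nsmul _ _ _ fun y hy => hmax y (mem_filter.1 hy).2
    _ = (G.induce (S : Set V)).degree ⟨x, hxS⟩ * |f x| := by rw [hcard, nsmul_eq_mul]

section Flip

variable {ι : Type*} [DecidableEq ι]

/-- The neighbour of the hypercube vertex `x` in direction `i`. -/
def flipCoord (i : ι) (x : ι → Bool) : ι → Bool :=
  Function.update x i !x i

theorem flipCoord_flipCoord_self (i : ι) (x : ι → Bool) : flipCoord i (flipCoord i x) = x := by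
  simp [flipCoord]

theorem flipCoord_comm (i j : ι) (x : ι → Bool) :
    flipCoord i (flipCoord j x) = flipCoord j (flipCoord i x) := by
  obtain rfl | hij := eq_or_ne i j
  · rfl
  · simp only [flipCoord, Function.update_of_ne hij, Function.update_of_ne hij.symm,
      Function.update_comm hij]

theorem flipCoord_left_injective (x : ι → Bool) : Function.Injective (flipCoord · x) := by
  intro i j hij
  by_contra hne
  simpa [flipCoord, Function.update_of_ne hne] using congrFun hij i

theorem filter_ne_eq_singleton_iff [Fintype ι] {x y : ι → Bool} {i : ι} :
    ({k | x k ≠ y k} : Finset ι) = {i} ↔ flipCoord i x = y := by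
  simp only [Finset.ext_iff, mem_filter_univ, mem_singleton, funext_iff, flipCoord,
    Function.update_apply]
  refine forall_congr' fun k => ?_
  by_cases hk : k = i
  · subst hk; cases x k <;> cases y k <;> simp
  · simp [hk]

end Flip

section Walsh

variable (R : Type*) [CommRing R] {ι : Type*}

/-- The Walsh character `x ↦ (-1) ^ ∑ j ∈ s, x j` of the hypercube, with values in `R`.
It supplies both the edge signs (initial segments `s`) and the parity of a vertex (`s = univ`). -/
def walsh (s : Finset ι) (x : ι → Bool) : R :=
  ∏ j ∈ s, if x j then -1 else 1

theorem walsh_mul_self (s : Finset ι) : walsh R s * walsh R s = 1 := by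
  ext x
  simp only [Pi.mul_apply, Pi.one_apply, walsh, ← prod_mul_distrib]
  exact prod_eq_one fun j _ => by split_ifs <;> simp

variable {R} [DecidableEq ι] {s : Finset ι} {i : ι}

theorem walsh_flipCoord_of_notMem (hi : i ∉ s) (x : ι → Bool) :
    walsh R s (flipCoord i x) = walsh R s x :=
  prod_congr rfl fun j hj => by
    rw [flipCoord, Function.update_of_ne (ne_of_mem_of_not_mem hj hi)]

theorem walsh_flipCoord_of_mem (hi : i ∈ s) (x : ι → Bool) :
    walsh R s (flipCoord i x) = -walsh R s x := by
  have hrest : walsh R (s.erase i) (flipCoord i x) = walsh R (s.erase i) x :=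
    walsh_flipCoord_of_notMem (notMem_erase i s) x
  simp only [walsh] at hrest ⊢
  rw [← mul_prod_erase s _ hi, ← mul_prod_erase s _ hi, hrest, flipCoord, Function.update_self]
  cases x i <;> simp

end Walsh

section SignedAdjacency

variable (R : Type*) [CommRing R] {ι : Type*}

theorem injective_mulLeft_walsh (s : Finset ι) :
    Function.Injective (LinearMap.mulLeft R (walsh R s)) := by
  refine Function.LeftInverse.injective (g := LinearMap.mulLeft R (walsh R s)) fun f => ?_
  rw [LinearMap.mulLeft_apply, LinearMap.mulLeft_apply, ← mul_assoc, walsh_mul_self, one_mul]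

variable [LinearOrder ι] [LocallyFiniteOrderBot ι]

/-- The part of Huang's signed adjacency operator that consists of the edges in direction `i`:
the edge between `x` and `flipCoord i x` carries the sign `(-1) ^ ∑ j < i, x j`,
which makes different directions anticommute. -/
def signedFlip (i : ι) : End R ((ι → Bool) → R) :=
  LinearMap.mulLeft R (walsh R (Iio i)) ∘ₗ LinearMap.funLeft R R (flipCoord i)

theorem signedFlip_apply (i : ι) (f : (ι → Bool) → R) (x : ι → Bool) :
    signedFlip R i f x = walsh R (Iio i) x * f (flipCoord i x) :=
  rfl

theorem signedFlip_mul_self (i : ι) : signedFlip R i * signedFlip R i = 1 := by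
  refine LinearMap.ext fun f => funext fun x => ?_
  have hsq : walsh R (Iio i) x * walsh R (Iio i) x = 1 := congrFun (walsh_mul_self R (Iio i)) x
  simp only [End.mul_apply, End.one_apply, signedFlip_apply, flipCoord_flipCoord_self,
    walsh_flipCoord_of_notMem notMem_Iio_self]
  rw [← mul_assoc, hsq, one_mul]

theorem signedFlip_anticommute {i j : ι} (hij : i ≠ j) :
    signedFlip R i * signedFlip R j = -(signedFlip R j * signedFlip R i) := by
  wlog hlt : i < j generalizing i j
  · rw [this hij.symm (hij.lt_or_gt.resolve_left hlt), neg_neg]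
  refine LinearMap.ext fun f => funext fun x => ?_
  simp only [LinearMap.neg_apply, Pi.neg_apply, End.mul_apply, signedFlip_apply]
  rw [walsh_flipCoord_of_mem (mem_Iio.2 hlt), walsh_flipCoord_of_notMem (by simpa using hlt.le),
    flipCoord_comm]
  ring

variable [Fintype ι]

theorem mulLeft_walsh_univ_anticommute_signedFlip (i : ι) :
    LinearMap.mulLeft R (walsh R univ) * signedFlip R i =
      -(signedFlip R i * LinearMap.mulLeft R (walsh R univ)) := by
  refine LinearMap.ext fun f => funext fun x => ?_
  simp only [LinearMap.neg_apply, Pi.neg_apply, End.mul_apply, signedFlip_apply,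
    LinearMap.mulLeft_apply, Pi.mul_apply, walsh_flipCoord_of_mem (mem_univ i)]
  ring

variable (ι) in
/-- Huang's signed adjacency operator of the hypercube with coordinates indexed by `ι`,
whose square is the number of coordinates. -/
def signedAdj : End R ((ι → Bool) → R) :=
  ∑ i, signedFlip R i

variable (ι) in
theorem signedAdj_mul_self : signedAdj R ι * signedAdj R ι = Fintype.card ι :=
  sum_mul_sum_self_eq_card_of_anticommute (fun i _ => signedFlip_mul_self R i)
    fun _ _ _ _ hij => signedFlip_anticommute R hij

variable (ι) in
theorem mulLeft_walsh_univ_anticommute_signedAdj :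
    LinearMap.mulLeft R (walsh R univ) * signedAdj R ι =
      -(signedAdj R ι * LinearMap.mulLeft R (walsh R univ)) :=
  mul_sum_eq_neg_sum_mul fun i _ => mulLeft_walsh_univ_anticommute_signedFlip R i

theorem abs_signedAdj_apply_le (f : (ι → Bool) → ℝ) (x : ι → Bool) :
    |signedAdj ℝ ι f x| ≤ ∑ i, |f (flipCoord i x)| := by
  have habs (i : ι) : |walsh ℝ (Iio i) x| = 1 :=
    (abs_eq zero_le_one).2 (mul_self_eq_one_iff.1 (congrFun (walsh_mul_self ℝ (Iio i)) x))
  rw [signedAdj, LinearMap.sum_apply, Finset.sum_apply]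
  refine (abs_sum_le_sum_abs _ _).trans_eq (sum_congr rfl fun i _ => ?_)
  rw [signedFlip_apply, abs_mul, habs, one_mul]

variable (ι) in
theorem two_pow_card_le_two_mul_finrank_eigenspace_signedAdj :
    2 ^ Fintype.card ι ≤ 2 * finrank ℝ ((signedAdj ℝ ι).eigenspace √(Fintype.card ι)) := by
  have hsq : signedAdj ℝ ι * signedAdj ℝ ι =
      (√(Fintype.card ι) * √(Fintype.card ι)) • 1 := by
    rw [signedAdj_mul_self, Real.mul_self_sqrt (Nat.cast_nonneg _), Nat.cast_smul_eq_nsmul,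
      nsmul_one]
  simpa using finrank_le_two_mul_finrank_eigenspace hsq (injective_mulLeft_walsh ℝ univ)
    (mulLeft_walsh_univ_anticommute_signedAdj ℝ ι)

end SignedAdjacency

theorem Qgraph_adj_iff {n : ℕ} {x y : Fin n → Bool} :
    (Qgraph n).Adj x y ↔ ∃ i, flipCoord i x = y :=
  card_eq_one.trans (exists_congr fun _ => filter_ne_eq_singleton_iff)

theorem sum_neighborFinset_Qgraph {M : Type*} [AddCommMonoid M] {n : ℕ} (g : (Fin n → Bool) → M)
    (x : Fin n → Bool) : ∑ y ∈ (Qgraph n).neighborFinset x, g y = ∑ i, g (flipCoord i x) := by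
  have hN : (Qgraph n).neighborFinset x = univ.image (flipCoord · x) := by
    ext y
    simp [Qgraph_adj_iff]
  rw [hN, sum_image (flipCoord_left_injective x).injOn]

theorem exists_sqrt_le_degree_induce_Qgraph {n : ℕ} {S : Finset (Fin n → Bool)}
    (hS : 2 ^ n < 2 * #S) :
    ∃ v : (S : Set (Fin n → Bool)), √n ≤ ((Qgraph n).induce (S : Set (Fin n → Bool))).degree v := by
  have hdim := two_pow_card_le_two_mul_finrank_eigenspace_signedAdj (Fin n)
  rw [Fintype.card_fin] at hdim
  have hcard : Fintype.card (Fin n → Bool) <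
      finrank ℝ ((signedAdj ℝ (Fin n)).eigenspace √n) + #S := by
    rw [Fintype.card_fun, Fintype.card_bool, Fintype.card_fin]
    lia
  obtain ⟨f, hfE, hf, hfS⟩ := exists_mem_ne_zero_forall_notMem_eq_zero hcard
  refine exists_le_degree_induce_of_mul_abs_le hf hfS fun x _ => ?_
  calc √n * |f x| = |signedAdj ℝ (Fin n) f x| := by
        rw [End.mem_eigenspace_iff.1 hfE, Pi.smul_apply, smul_eq_mul, abs_mul,
          abs_of_nonneg (Real.sqrt_nonneg n)]
    _ ≤ ∑ i, |f (flipCoord i x)| := abs_signedAdj_apply_le f x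
    _ = ∑ y ∈ (Qgraph n).neighborFinset x, |f y| :=
        (sum_neighborFinset_Qgraph (fun y => |f y|) x).symm

theorem logb_two_lt_two_mul_sqrt_sub_one {x : ℝ} (hx : 0 < x) : Real.logb 2 x < 2 * √x - 1 := by
  have hs : 0 < √x := Real.sqrt_pos.2 hx
  -- Tangent line of `log` at `3 / 2`, close to the minimizer `1 / log 2` of `s - logb 2 s`.
  have htangent : Real.log √x ≤ 2 / 3 * √x - 1 / 2 := by
    have hratio := Real.log_le_sub_one_of_pos (show 0 < √x / (3 / 2) by positivity)
    have hconst := Real.log_le_sub_one_of_pos (show (0 : ℝ) < 3 / 2 by norm_num)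
    rw [Real.log_div hs.ne' (by norm_num)] at hratio
    linarith
  have hlog : 2 / 3 < Real.log 2 := by linarith [Real.log_two_gt_d9]
  have hlog' : Real.log 2 < 1 := by linarith [Real.log_two_lt_d9]
  have hslope : √x * (2 / 3) < √x * Real.log 2 := mul_lt_mul_of_pos_left hlog hs
  rw [Real.log_sqrt hx.le] at htangent
  rw [Real.logb, div_lt_iff₀ (by linarith)]
  linarith

/-- Any induced subgraph of `Q_n` with at least `2^(n-1) + 1` vertices has a vertex of
degree greater than `(1/2)·log₂ n − (1/2)·log₂ log₂ n + 1/2`. -/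
theorem chung_lower_bound (n : ℕ) (hn : 2 ≤ n) (S : Finset (Fin n → Bool))
    (hS : 2 ^ (n - 1) + 1 ≤ S.card) :
    ∃ v : (↑S : Set (Fin n → Bool)),
      (1 / 2) * Real.logb 2 n - (1 / 2) * Real.logb 2 (Real.logb 2 n) + 1 / 2 <
        ((((Qgraph n).induce (↑S : Set (Fin n → Bool))).degree v : ℕ) : ℝ) := by
  have hpow : 2 ^ n = 2 * 2 ^ (n - 1) := by rw [← pow_succ', Nat.sub_add_cancel (by lia)]
  obtain ⟨v, hv⟩ := exists_sqrt_le_degree_induce_Qgraph (S := S) (by lia)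
  have hn' : (2 : ℝ) ≤ n := by exact_mod_cast hn
  have hlog := logb_two_lt_two_mul_sqrt_sub_one (x := n) (by linarith)
  have hone : 1 ≤ Real.logb 2 n := by
    rwa [Real.le_logb_iff_rpow_le one_lt_two (by linarith), Real.rpow_one]
  have hloglog : 0 ≤ Real.logb 2 (Real.logb 2 n) := Real.logb_nonneg one_lt_two hone
  exact ⟨v, by linarith⟩
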